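/- Let A, E ∈ ℝ^{n×n}, B ∈ ℝ^{n×m}, and let s_1, …, s_k ∈ ℂ be pairwise distinct with Re(s_i) > 0 and A − s_i E invertible for each i. Let V = [(A − s_1 E)^{-1} B, …, (A − s_k E)^{-1} B] ∈ ℂ^{n×km}, and let X ∈ ℂ^{km×km} be the Hermitian positive definite matrix with m×m blocks X_{ij} = (s̄_i + s_j)^{-1} I_m. Let Z = [Z_1, …, Z_k] be produced by the low-rank ADI iteration Z_1 = √(2 Re(s_1)) (A − s_1 E)^{-1} B and Z_i = √(Re(s_i)/Re(s_{i−1})) [I + (s_i + s̄_{i−1})(A − s_i E)^{-1} E] Z_{i−1} for i ≥ 2. Then V X^{-1} V^H = Z Z^H; i.e., the ADI approximation can be computed from the rational block Krylov basis V by solving the small matrix equation X S + S^H X = L^H L with S = blkdiag(s_1 I_m, …, s_k I_m) and L = [I_m, …, I_m]. -/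

import Mathlib

open Matrix Complex

/-!
Orthonormalising the Cauchy kernels `w ↦ (s̄ⱼ + w)⁻¹` gives the Takenaka–Malmquist functions `φᵢ`.
Two telescoping sums over their Blaschke products `bᵢ` carry the proof, with `T = (φᵢ(sⱼ))ᵢⱼ`:
* `(z̄ + w) conj φᵢ(z) φᵢ(w) = conj bᵢ(z) bᵢ(w) - conj bᵢ₊₁(z) bᵢ₊₁(w)` yields
  `Tᴴ T = ((s̄ᵢ + sⱼ)⁻¹)ᵢⱼ`;
* `(A - w E) φᵢ(w) Zᵢ = bᵢ(w) Wᵢ - bᵢ₊₁(w) Wᵢ₊₁`, where `W₀ = B` and the `Wᵢ` are the ADI residual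
  factors, yields `V = Z (T ⊗ I)`.

In both sums the last term vanishes at `w = sⱼ`. Since `T` is triangular with nonzero diagonal,
`V ((T ⊗ I)ᴴ (T ⊗ I))⁻¹ Vᴴ = Z Zᴴ`.
-/

open scoped Kronecker
open Finset (range)

section MatrixAlgebra

variable {ι κ ν R : Type*}

theorem mul_mul_inv_conjTranspose_mul_self_mul_conjTranspose [Fintype ν] [DecidableEq ν]
    [CommRing R] [StarRing R] (Z : Matrix ι ν R) {T : Matrix ν ν R} (hT : IsUnit T.det) :
    (Z * T) * (Tᴴ * T)⁻¹ * (Z * T)ᴴ = Z * Zᴴ := by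
  have hT' : IsUnit Tᴴ.det := by rw [det_conjTranspose]; exact hT.star
  calc (Z * T) * (Tᴴ * T)⁻¹ * (Z * T)ᴴ
      = Z * (T * T⁻¹) * (Tᴴ⁻¹ * Tᴴ) * Zᴴ := by
        simp only [Matrix.mul_inv_rev, conjTranspose_mul, Matrix.mul_assoc]
    _ = Z * Zᴴ := by
        rw [mul_nonsing_inv _ hT, nonsing_inv_mul _ hT', Matrix.mul_one, Matrix.mul_one]

/-- The block matrix `[F₁, F₂, …]`; column `a` of the block `F j` has index `(j, a)`. -/
def blockRow (F : ν → Matrix ι κ R) : Matrix ι (ν × κ) R :=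
  of fun r p => F p.1 r p.2

theorem blockRow_mul_kronecker_one [Fintype ν] [Fintype κ] [DecidableEq κ] [CommSemiring R]
    {μ : Type*} (F : ν → Matrix ι κ R) (T : Matrix ν μ R) :
    blockRow F * (T ⊗ₖ (1 : Matrix κ κ R)) = blockRow fun j => ∑ i, T i j • F i := by
  ext r ⟨j, a⟩
  simp [blockRow, mul_apply, one_apply, Fintype.sum_prod_type, Matrix.sum_apply, mul_comm]

theorem inv_sub_smul_mul_add_smul [Fintype ι] [DecidableEq ι] [CommRing R] (A E : Matrix ι ι R)
    {y : R} (t : R) (hy : IsUnit (A - y • E).det) :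
    (A - y • E)⁻¹ * (A + t • E) = 1 + (y + t) • ((A - y • E)⁻¹ * E) := by
  have hsplit : A + t • E = (A - y • E) + (y + t) • E := by module
  rw [hsplit, Matrix.mul_add, nonsing_inv_mul _ hy, Matrix.mul_smul]

end MatrixAlgebra

section TakenakaMalmquist

theorem add_star_ne_zero_of_re_pos {w z : ℂ} (hw : 0 < w.re) (hz : 0 < z.re) :
    w + star z ≠ 0 := fun h => by
  have hre : w.re + z.re = 0 := by simpa using congrArg re h
  linarith

theorem ofReal_sqrt_two_mul_re_mul_self {z : ℂ} (hz : 0 ≤ z.re) :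
    (√(2 * z.re) : ℂ) * √(2 * z.re) = z + star z := by
  rw [← ofReal_mul, Real.mul_self_sqrt (by positivity)]
  exact (add_conj z).symm

/-- The Blaschke product `bᵢ` of the right half plane with zeros `s 0, …, s (i - 1)`. -/
noncomputable def blaschkeProduct (s : ℕ → ℂ) (i : ℕ) (w : ℂ) : ℂ :=
  ∏ l ∈ range i, (w - s l) / (w + star (s l))

/-- The Takenaka–Malmquist function `φᵢ` of the right half plane with poles `-s̄ 0, …, -s̄ i`. -/
noncomputable def takenakaMalmquist (s : ℕ → ℂ) (i : ℕ) (w : ℂ) : ℂ :=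
  √(2 * (s i).re) / (w + star (s i)) * blaschkeProduct s i w

/-- The upper triangular matrix `T = (φᵢ(sⱼ))ᵢⱼ`, used to factor the Cauchy matrix
`((s̄ᵢ + sⱼ)⁻¹)ᵢⱼ` as `Tᴴ T`. -/
noncomputable def takenakaMalmquistMatrix (s : ℕ → ℂ) (k : ℕ) : Matrix (Fin k) (Fin k) ℂ :=
  of fun i j => takenakaMalmquist s i (s j)

variable {s : ℕ → ℂ}

theorem blaschkeProduct_succ (s : ℕ → ℂ) (i : ℕ) (w : ℂ) :
    blaschkeProduct s (i + 1) w =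
      blaschkeProduct s i w * ((w - s i) / (w + star (s i))) :=
  Finset.prod_range_succ _ _

theorem blaschkeProduct_eq_zero_of_lt (s : ℕ → ℂ) {i j : ℕ} (hj : j < i) :
    blaschkeProduct s i (s j) = 0 :=
  Finset.prod_eq_zero (Finset.mem_range.2 hj) (by simp)

theorem blaschkeProduct_ne_zero {i : ℕ} {w : ℂ} (hzero : ∀ l < i, w ≠ s l)
    (hpole : ∀ l < i, w + star (s l) ≠ 0) : blaschkeProduct s i w ≠ 0 :=
  Finset.prod_ne_zero_iff.2 fun l hl =>
    have hl := Finset.mem_range.1 hl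
    div_ne_zero (sub_ne_zero.2 (hzero l hl)) (hpole l hl)

theorem star_add_mul_star_takenakaMalmquist_mul {i : ℕ} {w z : ℂ} (hs : 0 ≤ (s i).re)
    (hw : w + star (s i) ≠ 0) (hz : z + star (s i) ≠ 0) :
    (star z + w) * (star (takenakaMalmquist s i z) * takenakaMalmquist s i w) =
      star (blaschkeProduct s i z) * blaschkeProduct s i w -
        star (blaschkeProduct s (i + 1) z) * blaschkeProduct s (i + 1) w := by
  have hz' : star z + s i ≠ 0 := by simpa using star_ne_zero.2 hz
  have hsqrt := ofReal_sqrt_two_mul_re_mul_self hs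
  have hstar : star (√(2 * (s i).re) : ℂ) = √(2 * (s i).re) := conj_ofReal _
  simp only [takenakaMalmquist, blaschkeProduct_succ, star_mul', star_div₀, star_add, star_sub,
    star_star, hstar]
  field_simp
  linear_combination
    star (blaschkeProduct s i z) * blaschkeProduct s i w * (star z + w) * hsqrt

theorem star_add_mul_sum_star_takenakaMalmquist_mul {k : ℕ} {w z : ℂ}
    (hs : ∀ i < k, 0 ≤ (s i).re) (hw : ∀ i < k, w + star (s i) ≠ 0)
    (hz : ∀ i < k, z + star (s i) ≠ 0) :
    (star z + w) * ∑ i ∈ range k, star (takenakaMalmquist s i z) * takenakaMalmquist s i w =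
      1 - star (blaschkeProduct s k z) * blaschkeProduct s k w := by
  calc _ = ∑ i ∈ range k, (star (blaschkeProduct s i z) * blaschkeProduct s i w -
        star (blaschkeProduct s (i + 1) z) * blaschkeProduct s (i + 1) w) := by
        rw [Finset.mul_sum]
        refine Finset.sum_congr rfl fun i hi => ?_
        have hi := Finset.mem_range.1 hi
        exact star_add_mul_star_takenakaMalmquist_mul (hs i hi) (hw i hi) (hz i hi)
    _ = _ := by
        rw [Finset.sum_range_sub' fun i => star (blaschkeProduct s i z) * blaschkeProduct s i w]
        simp [blaschkeProduct]

theorem conjTranspose_mul_takenakaMalmquistMatrix {k : ℕ} (hs : ∀ i < k, 0 < (s i).re) :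
    (takenakaMalmquistMatrix s k)ᴴ * takenakaMalmquistMatrix s k =
      of fun i j : Fin k => (star (s i) + s j)⁻¹ := by
  ext p q
  have hpole (j : Fin k) (i : ℕ) (hi : i < k) : s j + star (s i) ≠ 0 :=
    add_star_ne_zero_of_re_pos (hs j j.2) (hs i hi)
  have hsum := star_add_mul_sum_star_takenakaMalmquist_mul (fun i hi => (hs i hi).le)
    (hpole q) (hpole p)
  rw [blaschkeProduct_eq_zero_of_lt s q.2, mul_zero, sub_zero] at hsum
  rw [of_apply, ← eq_inv_of_mul_eq_one_right hsum, mul_apply, ← Fin.sum_univ_eq_sum_range]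
  rfl

theorem isUnit_det_takenakaMalmquistMatrix {k : ℕ} (hs : ∀ i < k, 0 < (s i).re)
    (hdist : Set.InjOn s (Set.Iio k)) : IsUnit (takenakaMalmquistMatrix s k).det := by
  have htri : (takenakaMalmquistMatrix s k).IsUpperTriangular := fun i j hji => by
    rw [takenakaMalmquistMatrix, of_apply, takenakaMalmquist,
      blaschkeProduct_eq_zero_of_lt s (i := i) (j := j) hji, mul_zero]
  rw [det_of_isUpperTriangular htri, isUnit_iff_ne_zero, Finset.prod_ne_zero_iff]
  intro i _
  have hpole (l : ℕ) (hl : l < k) : s i + star (s l) ≠ 0 :=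
    add_star_ne_zero_of_re_pos (hs i i.2) (hs l hl)
  have hsqrt : (√(2 * (s i).re) : ℂ) ≠ 0 :=
    ofReal_ne_zero.2 (Real.sqrt_pos.2 (by linarith [hs i i.2])).ne'
  refine mul_ne_zero (div_ne_zero hsqrt (hpole i i.2)) (blaschkeProduct_ne_zero ?_ ?_)
  · exact fun l hl h => hl.ne' (hdist i.2 (hl.trans i.2) h)
  · exact fun l hl => hpole l (hl.trans i.2)

end TakenakaMalmquist

section ADI

variable {ι κ : Type*} [Fintype ι] [DecidableEq ι] {A E : Matrix ι ι ℂ} {B : Matrix ι κ ℂ}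
  {s : ℕ → ℂ}

/-- The ADI residual factor `Wᵢ`: the ADI approximation after `i` steps leaves the residual
`Wᵢ Wᵢᴴ` in the Lyapunov equation `A P Eᴴ + E P Aᴴ + B Bᴴ = 0`. -/
noncomputable def adiResidualFactor (A E : Matrix ι ι ℂ) (B : Matrix ι κ ℂ) (s : ℕ → ℂ) :
    ℕ → Matrix ι κ ℂ
  | 0 => B
  | i + 1 => (A + star (s i) • E) * ((A - s i • E)⁻¹ * adiResidualFactor A E B s i)

/-- The `i`-th block column `Zᵢ` of the low-rank ADI factor, in terms of the residual factor. -/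
noncomputable def adiBlock (A E : Matrix ι ι ℂ) (B : Matrix ι κ ℂ) (s : ℕ → ℂ) (i : ℕ) :
    Matrix ι κ ℂ :=
  (√(2 * (s i).re) : ℂ) • ((A - s i • E)⁻¹ * adiResidualFactor A E B s i)

theorem adiBlock_zero (A E : Matrix ι ι ℂ) (B : Matrix ι κ ℂ) (s : ℕ → ℂ) :
    adiBlock A E B s 0 = (√(2 * (s 0).re) : ℂ) • ((A - s 0 • E)⁻¹ * B) :=
  rfl

theorem adiBlock_succ (B : Matrix ι κ ℂ) {i : ℕ} (hs : 0 < (s i).re)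
    (hinv : IsUnit (A - s (i + 1) • E).det) :
    adiBlock A E B s (i + 1) = (√((s (i + 1)).re / (s i).re) : ℂ) •
      ((1 + (s (i + 1) + star (s i)) • ((A - s (i + 1) • E)⁻¹ * E)) * adiBlock A E B s i) := by
  have hsqrt : √((s (i + 1)).re / (s i).re) * √(2 * (s i).re) = √(2 * (s (i + 1)).re) := by
    rw [← Real.sqrt_mul' _ (by positivity)]
    congr 1
    field_simp
  rw [← inv_sub_smul_mul_add_smul A E _ hinv, adiBlock, adiBlock, Matrix.mul_smul, smul_smul,
    ← ofReal_mul, hsqrt, Matrix.mul_assoc, adiResidualFactor]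

theorem eq_adiBlock_of_recurrence {k : ℕ} (hs : ∀ i < k, 0 < (s i).re)
    (hinv : ∀ i < k, IsUnit (A - s i • E).det) {Z : ℕ → Matrix ι κ ℂ}
    (hZ0 : Z 0 = (√(2 * (s 0).re) : ℂ) • ((A - s 0 • E)⁻¹ * B))
    (hZsucc : ∀ i, i + 1 < k →
      Z (i + 1) = (√((s (i + 1)).re / (s i).re) : ℂ) •
        ((1 + (s (i + 1) + star (s i)) • ((A - s (i + 1) • E)⁻¹ * E)) * Z i))
    {i : ℕ} (hi : i < k) : Z i = adiBlock A E B s i := by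
  induction i with
  | zero => rw [hZ0, adiBlock_zero]
  | succ i ih =>
    have hik : i < k := Nat.lt_of_succ_lt hi
    rw [hZsucc i hi, ih hik, adiBlock_succ B (hs i hik) (hinv _ hi)]

theorem sub_smul_mul_takenakaMalmquist_smul_adiBlock (B : Matrix ι κ ℂ) {i : ℕ} {w : ℂ}
    (hs : 0 ≤ (s i).re) (hinv : IsUnit (A - s i • E).det) (hw : w + star (s i) ≠ 0) :
    (A - w • E) * (takenakaMalmquist s i w • adiBlock A E B s i) =
      blaschkeProduct s i w • adiResidualFactor A E B s i -
        blaschkeProduct s (i + 1) w • adiResidualFactor A E B s (i + 1) := by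
  set U := (A - s i • E)⁻¹ * adiResidualFactor A E B s i
  have hW : adiResidualFactor A E B s i = (A - s i • E) * U :=
    (mul_nonsing_inv_cancel_left _ _ hinv).symm
  have hW_succ : adiResidualFactor A E B s (i + 1) = (A + star (s i) • E) * U := rfl
  have hcoeff : takenakaMalmquist s i w * √(2 * (s i).re) =
      blaschkeProduct s i w * ((s i + star (s i)) / (w + star (s i))) := by
    rw [takenakaMalmquist, ← ofReal_sqrt_two_mul_re_mul_self hs]
    ring
  have hpencil : ((s i + star (s i)) / (w + star (s i))) • (A - w • E) =
      (A - s i • E) - ((w - s i) / (w + star (s i))) • (A + star (s i) • E) := by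
    match_scalars <;> field_simp <;> ring
  calc (A - w • E) * (takenakaMalmquist s i w • adiBlock A E B s i)
      = blaschkeProduct s i w •
          ((((s i + star (s i)) / (w + star (s i))) • (A - w • E)) * U) := by
        rw [adiBlock, smul_smul, hcoeff, Matrix.mul_smul, mul_smul, Matrix.smul_mul]
    _ = blaschkeProduct s i w • ((A - s i • E) * U -
          ((w - s i) / (w + star (s i))) • ((A + star (s i) • E) * U)) := by
        rw [hpencil, Matrix.sub_mul, Matrix.smul_mul]
    _ = _ := by
        rw [← hW, hW_succ, blaschkeProduct_succ, mul_smul, smul_sub]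

theorem sum_takenakaMalmquist_smul_adiBlock (B : Matrix ι κ ℂ) {k j : ℕ} (hj : j < k)
    (hs : ∀ i < k, 0 < (s i).re) (hinv : ∀ i < k, IsUnit (A - s i • E).det) :
    ∑ i ∈ range k, takenakaMalmquist s i (s j) • adiBlock A E B s i = (A - s j • E)⁻¹ * B := by
  have htelescope : (A - s j • E) *
      ∑ i ∈ range k, takenakaMalmquist s i (s j) • adiBlock A E B s i = B := by
    calc _ = ∑ i ∈ range k, (blaschkeProduct s i (s j) • adiResidualFactor A E B s i -
          blaschkeProduct s (i + 1) (s j) • adiResidualFactor A E B s (i + 1)) := by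
          rw [Matrix.mul_sum]
          refine Finset.sum_congr rfl fun i hi => ?_
          have hi := Finset.mem_range.1 hi
          exact sub_smul_mul_takenakaMalmquist_smul_adiBlock B (hs i hi).le (hinv i hi)
            (add_star_ne_zero_of_re_pos (hs j hj) (hs i hi))
      _ = B := by
          rw [Finset.sum_range_sub' fun i =>
            blaschkeProduct s i (s j) • adiResidualFactor A E B s i,
            blaschkeProduct_eq_zero_of_lt s hj]
          simp [blaschkeProduct, adiResidualFactor]
  rw [← nonsing_inv_mul_cancel_left _ (∑ i ∈ range k, _) (hinv j hj), htelescope]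

theorem blockRow_adiBlock_mul_kronecker_one [Fintype κ] [DecidableEq κ] (B : Matrix ι κ ℂ)
    {k : ℕ} (hs : ∀ i < k, 0 < (s i).re) (hinv : ∀ i < k, IsUnit (A - s i • E).det) :
    blockRow (fun i : Fin k => adiBlock A E B s i) *
        (takenakaMalmquistMatrix s k ⊗ₖ (1 : Matrix κ κ ℂ)) =
      blockRow fun j : Fin k => (A - s j • E)⁻¹ * B := by
  rw [blockRow_mul_kronecker_one]
  congr! 2 with j
  rw [← sum_takenakaMalmquist_smul_adiBlock B j.2 hs hinv, ← Fin.sum_univ_eq_sum_range]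
  rfl

theorem adi_krylov_computation_general [Fintype κ] [DecidableEq κ] (k : ℕ)
    (A E : Matrix ι ι ℂ) (B : Matrix ι κ ℂ)
    (s : ℕ → ℂ) (hs : ∀ i < k, 0 < (s i).re)
    (hdist : ∀ i < k, ∀ j < k, s i = s j → i = j)
    (hinv : ∀ i < k, IsUnit (A - s i • E).det)
    (V : Matrix ι (Fin k × κ) ℂ)
    (hV : ∀ r p, V r p = ((A - s p.1 • E)⁻¹ * B) r p.2)
    (X : Matrix (Fin k × κ) (Fin k × κ) ℂ)
    (hX : ∀ p q, X p q = (star (s p.1) + s q.1)⁻¹ * (if p.2 = q.2 then 1 else 0))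
    (Z : ℕ → Matrix ι κ ℂ)
    (hZ0 : Z 0 = (√(2 * (s 0).re) : ℂ) • ((A - s 0 • E)⁻¹ * B))
    (hZsucc : ∀ i, i + 1 < k →
      Z (i + 1) = (√((s (i + 1)).re / (s i).re) : ℂ) •
        ((1 + (s (i + 1) + star (s i)) • ((A - s (i + 1) • E)⁻¹ * E)) * Z i))
    (Zfull : Matrix ι (Fin k × κ) ℂ) (hZfull : ∀ r p, Zfull r p = Z p.1 r p.2) :
    V * X⁻¹ * Vᴴ = Zfull * Zfullᴴ := by
  let T : Matrix (Fin k × κ) (Fin k × κ) ℂ := takenakaMalmquistMatrix s k ⊗ₖ 1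
  have hT : IsUnit T.det := by
    rw [det_kronecker, det_one, one_pow, mul_one]
    exact (isUnit_det_takenakaMalmquistMatrix hs fun i hi j hj => hdist i hi j hj).pow _
  have hX_eq : X = Tᴴ * T := by
    rw [conjTranspose_kronecker, conjTranspose_one, ← mul_kronecker_mul, Matrix.one_mul,
      conjTranspose_mul_takenakaMalmquistMatrix hs]
    exact Matrix.ext hX
  have hZfull_eq : Zfull = blockRow fun i : Fin k => adiBlock A E B s i := Matrix.ext fun r p => by
    rw [hZfull, eq_adiBlock_of_recurrence hs hinv hZ0 hZsucc p.1.2, blockRow, of_apply]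
  have hV_eq : V = Zfull * T := by
    rw [hZfull_eq, blockRow_adiBlock_mul_kronecker_one B hs hinv]
    exact Matrix.ext hV
  rw [hX_eq, hV_eq, mul_mul_inv_conjTranspose_mul_self_mul_conjTranspose _ hT]

end ADI

/-- Krylov-subspace computation of the ADI approximation (Theorem 1):
for the rational block Krylov basis `V` and the Cauchy-type matrix `X` with
blocks `(s̄ᵢ + sⱼ)⁻¹ I_m`, the ADI low-rank factor `Z = [Z₁,…,Z_k]` satisfies
`V X⁻¹ Vᴴ = Z Zᴴ`. -/
theorem adi_krylov_computation
    {n m : ℕ} (k : ℕ)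
    (A E : Matrix (Fin n) (Fin n) ℝ) (B : Matrix (Fin n) (Fin m) ℝ)
    (Ac Ec : Matrix (Fin n) (Fin n) ℂ) (Bc : Matrix (Fin n) (Fin m) ℂ)
    (hAc : Ac = A.map Complex.ofReal) (hEc : Ec = E.map Complex.ofReal)
    (hBc : Bc = B.map Complex.ofReal)
    (s : ℕ → ℂ) (hs : ∀ i < k, 0 < (s i).re)
    (hdist : ∀ i < k, ∀ j < k, s i = s j → i = j)
    (hinv : ∀ i < k, IsUnit (Ac - s i • Ec).det)
    -- the rational block Krylov basis V = [(A−s₁E)⁻¹B, …, (A−s_kE)⁻¹B]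
    (V : Matrix (Fin n) (Fin k × Fin m) ℂ)
    (hV : ∀ r p, V r p = ((Ac - s p.1 • Ec)⁻¹ * Bc) r p.2)
    -- X with m×m blocks X_{ij} = (s̄ᵢ + sⱼ)⁻¹ I_m
    (X : Matrix (Fin k × Fin m) (Fin k × Fin m) ℂ)
    (hX : ∀ p q, X p q = (star (s p.1) + s q.1)⁻¹ * (if p.2 = q.2 then 1 else 0))
    -- the classical low-rank ADI iteration
    (Z : ℕ → Matrix (Fin n) (Fin m) ℂ)
    (hZ0 : Z 0 = (Real.sqrt (2 * (s 0).re) : ℂ) • ((Ac - s 0 • Ec)⁻¹ * Bc))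
    (hZsucc : ∀ i, i + 1 < k →
      Z (i + 1) = (Real.sqrt ((s (i + 1)).re / (s i).re) : ℂ) •
        (((1 : Matrix (Fin n) (Fin n) ℂ)
            + (s (i + 1) + star (s i)) • ((Ac - s (i + 1) • Ec)⁻¹ * Ec)) * Z i))
    -- the concatenated low-rank factor Z = [Z₁, …, Z_k]
    (Zfull : Matrix (Fin n) (Fin k × Fin m) ℂ)
    (hZfull : ∀ r p, Zfull r p = Z p.1 r p.2) :
    V * X⁻¹ * Vᴴ = Zfull * Zfullᴴ :=
  adi_krylov_computation_general k Ac Ec Bc s hs hdist hinv V hV X hX Z hZ0 hZsucc Zfull hZfull
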